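/- For the equioriented type A_ℓ quiver x₀ → x₁ → ⋯ → x_ℓ, a central charge α : Q₀ → ℝ is complete (the HN type along α determines a representation up to isomorphism) if and only if α(x_i) > α(x_{i+1}) for all 0 ≤ i ≤ ℓ−1. -/

import Mathlib

open scoped BigOperators

/-- A finite-dimensional representation of a quiver with vertex set `Q₀`,
edge set `Q₁`, source map `σ` and target map `τ`, over a field `K`. -/
structure QRep (Q₀ Q₁ : Type) (σ τ : Q₁ → Q₀) (K : Type) [Field K] where
  V : Q₀ → Type
  [addgrp : ∀ x, AddCommGroup (V x)]
  [mod : ∀ x, Module K (V x)]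
  [fd : ∀ x, FiniteDimensional K (V x)]
  f : ∀ e, V (σ e) →ₗ[K] V (τ e)

attribute [instance] QRep.addgrp QRep.mod QRep.fd

namespace QRep

variable {Q₀ Q₁ : Type} {σ τ : Q₁ → Q₀} {K : Type} [Field K]

/-- A family of subspaces forms a subrepresentation if it is invariant under the edge maps. -/
def IsSubrep (M : QRep Q₀ Q₁ σ τ K) (W : ∀ x, Submodule K (M.V x)) : Prop :=
  ∀ e, Submodule.map (M.f e) (W (σ e)) ≤ W (τ e)

variable [Fintype Q₀]

/-- The slope of a dimension vector along a central charge `α`. -/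
noncomputable def slopeVec (α : Q₀ → ℝ) (d : Q₀ → ℕ) : ℝ :=
  (∑ x, α x * (d x : ℝ)) / (∑ x, (d x : ℝ))

/-- The dimension vector of a representation. -/
noncomputable def dimVec (M : QRep Q₀ Q₁ σ τ K) (x : Q₀) : ℕ :=
  Module.finrank K (M.V x)

/-- The dimension vector of a family of subspaces. -/
noncomputable def dimVecOf (M : QRep Q₀ Q₁ σ τ K) (W : ∀ x, Submodule K (M.V x)) (x : Q₀) : ℕ :=
  Module.finrank K (W x)

/-- The slope of a representation along a central charge `α`. -/
noncomputable def slope (α : Q₀ → ℝ) (M : QRep Q₀ Q₁ σ τ K) : ℝ :=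
  slopeVec α (dimVec M)

def Nonzero (M : QRep Q₀ Q₁ σ τ K) : Prop := ∃ x, dimVec M x ≠ 0

/-- `α`-semistability: every nonzero subrepresentation has slope at most the slope of `M`. -/
def Semistable (α : Q₀ → ℝ) (M : QRep Q₀ Q₁ σ τ K) : Prop :=
  ∀ W, IsSubrep M W → (∃ x, W x ≠ ⊥) → slopeVec α (dimVecOf M W) ≤ slope α M

/-- `α`-stability: every nonzero proper subrepresentation has slope strictly less
than the slope of `M`. -/
def Stable (α : Q₀ → ℝ) (M : QRep Q₀ Q₁ σ τ K) : Prop :=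
  ∀ W, IsSubrep M W → (∃ x, W x ≠ ⊥) → (∃ x, W x ≠ ⊤) →
    slopeVec α (dimVecOf M W) < slope α M

/-- The subrepresentation determined by an invariant family of subspaces, as a representation. -/
noncomputable def subrep (M : QRep Q₀ Q₁ σ τ K) (W : ∀ x, Submodule K (M.V x))
    (h : IsSubrep M W) : QRep Q₀ Q₁ σ τ K where
  V x := W x
  f e := (M.f e).restrict (fun v hv => h e ⟨v, hv, rfl⟩)

/-- The quotient representation of `M` by an invariant family of subspaces. -/
noncomputable def quotRep (M : QRep Q₀ Q₁ σ τ K) (W : ∀ x, Submodule K (M.V x))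
    (h : IsSubrep M W) : QRep Q₀ Q₁ σ τ K where
  V x := M.V x ⧸ W x
  f e := Submodule.mapQ _ _ (M.f e) (Submodule.map_le_iff_le_comap.mp (h e))

/-- The direct sum of two representations. -/
noncomputable def prodRep (M N : QRep Q₀ Q₁ σ τ K) : QRep Q₀ Q₁ σ τ K where
  V x := M.V x × N.V x
  f e := (M.f e).prodMap (N.f e)

end QRep

namespace QRep

variable {Q₀ Q₁ : Type} {σ τ : Q₁ → Q₀} {K : Type} [Field K] [Fintype Q₀]

/-- The dimension vector of the subquotient `B/A`. -/
noncomputable def quotDimVec (M : QRep Q₀ Q₁ σ τ K) (A B : ∀ x, Submodule K (M.V x))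
    (x : Q₀) : ℕ :=
  Module.finrank K (B x) - Module.finrank K (A x)

/-- Semistability of the subquotient `B/A` of `M`, expressed via the correspondence
between subrepresentations of `B/A` and subrepresentations `Z` of `M` with `A ≤ Z ≤ B`. -/
def SemistableQuot (α : Q₀ → ℝ) (M : QRep Q₀ Q₁ σ τ K)
    (A B : ∀ x, Submodule K (M.V x)) : Prop :=
  ∀ Z, IsSubrep M Z → (∀ x, A x ≤ Z x) → (∀ x, Z x ≤ B x) → (∃ x, Z x ≠ A x) →
    slopeVec α (quotDimVec M A Z) ≤ slopeVec α (quotDimVec M A B)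

/-- A Harder–Narasimhan filtration of `M` along the central charge `α`:
a strictly increasing finite filtration by subrepresentations, starting at `0`
and ending at `M`, whose successive quotients are `α`-semistable of strictly
decreasing slopes. -/
structure HNFiltration (α : Q₀ → ℝ) (M : QRep Q₀ Q₁ σ τ K) where
  n : ℕ
  W : Fin (n+1) → ∀ x, Submodule K (M.V x)
  subrep : ∀ i, IsSubrep M (W i)
  bot : ∀ x, W 0 x = ⊥
  top : ∀ x, W (Fin.last n) x = ⊤
  mono : ∀ (i : Fin n) (x : Q₀), W i.castSucc x ≤ W i.succ x
  proper : ∀ i : Fin n, ∃ x, W i.castSucc x ≠ W i.succ x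
  ss : ∀ i : Fin n, SemistableQuot α M (W i.castSucc) (W i.succ)
  dec : ∀ i j : Fin n, i < j →
    slopeVec α (quotDimVec M (W j.castSucc) (W j.succ)) <
      slopeVec α (quotDimVec M (W i.castSucc) (W i.succ))

open scoped Classical in
/-- The Harder–Narasimhan type of a filtration, viewed as a function `ℝ → (Q₀ → ℕ)`
sending a slope to the dimension vector of the corresponding semistable subquotient
(and to `0` if no subquotient has that slope). -/
noncomputable def HNFiltration.typeFun {α : Q₀ → ℝ} {M : QRep Q₀ Q₁ σ τ K}
    (F : HNFiltration α M) : ℝ → Q₀ → ℕ := fun lam x =>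
  ∑ i : Fin F.n,
    if slopeVec α (quotDimVec M (F.W i.castSucc) (F.W i.succ)) = lam then
      quotDimVec M (F.W i.castSucc) (F.W i.succ) x
    else 0

/-- An isomorphism of quiver representations. -/
structure RepIso (M N : QRep Q₀ Q₁ σ τ K) where
  g : ∀ x, M.V x ≃ₗ[K] N.V x
  comm : ∀ e v, g (τ e) (M.f e v) = N.f e (g (σ e) v)

/-- Two representations have equal HN type along `α`. -/
def SameHNType (α : Q₀ → ℝ) (M N : QRep Q₀ Q₁ σ τ K) : Prop :=
  ∃ (F : HNFiltration α M) (G : HNFiltration α N), F.typeFun = G.typeFun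

/-- A central charge is complete if equality of HN types implies isomorphism. -/
def Complete (α : Q₀ → ℝ) : Prop :=
  ∀ M N : QRep Q₀ Q₁ σ τ K, SameHNType α M N → Nonempty (RepIso M N)

/-- A representation is indecomposable if it is nonzero and admits no nontrivial
direct sum decomposition. -/
def Indecomposable (M : QRep Q₀ Q₁ σ τ K) : Prop :=
  Nonzero M ∧ ∀ A B : QRep Q₀ Q₁ σ τ K,
    Nonempty (RepIso M (prodRep A B)) → ¬(Nonzero A ∧ Nonzero B)

end QRep

/-! For `t : ℝ`, the step of slope at least `t` of a Harder–Narasimhan filtration along `α` is the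
largest subrepresentation maximizing the weight of `α - t`, so the dimension vector of that
maximizer is read off the HN type, while the maximizer itself is compatible with isomorphisms and
direct sums. When `α` is decreasing, an interval representation is semistable, and its maximizer is
everything or zero according to whether its slope is at least `t`. The HN type of a sum of intervals
therefore counts, for all `t` and `x`, the summands of slope at least `t` containing `x`. Intervals
with the same left endpoint are told apart by their slopes, so these counts determine the summands
by descending induction on the slope.

Conversely, if `α` does not decrease along an edge, then the two representations `K → K` supported
on that edge, with the identity and with the zero map, are filtered by the same dimension vectors
and have the same HN type. -/

theorem finrank_comap_add_finrank_map {K A B C : Type*} [Field K] [AddCommGroup A] [Module K A]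
    [AddCommGroup B] [Module K B] [AddCommGroup C] [Module K C] [FiniteDimensional K B]
    {i : A →ₗ[K] B} {p : B →ₗ[K] C} (hi : Function.Injective i) (hip : i.range = p.ker)
    (Z : Submodule K B) :
    Module.finrank K (Z.comap i) + Module.finrank K (Z.map p) = Module.finrank K Z := by
  have hker : Module.finrank K (p.domRestrict Z).ker = Module.finrank K (Z.comap i) := by
    rw [LinearMap.ker_domRestrict, ← Submodule.finrank_map_subtype_eq,
      Submodule.map_comap_subtype, inf_comm, ← hip, ← Submodule.map_comap_eq,
      (Submodule.equivMapOfInjective i hi _).finrank_eq]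
  rw [← LinearMap.finrank_range_add_finrank_ker (p.domRestrict Z), hker,
    LinearMap.range_domRestrict, add_comm]

theorem finrank_submodule_prod {K A B : Type*} [Field K] [AddCommGroup A] [Module K A]
    [AddCommGroup B] [Module K B] [FiniteDimensional K A] [FiniteDimensional K B]
    (p : Submodule K A) (q : Submodule K B) :
    Module.finrank K (p.prod q) = Module.finrank K p + Module.finrank K q := by
  rw [← finrank_comap_add_finrank_map LinearMap.inl_injective (LinearMap.range_inl K A B),
    Submodule.prod_comap_inl, Submodule.prod_map_snd]

/-- The splitting of a linear map `p` with right inverse `i`, as an isomorphism with `W × p.ker`. -/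
def equivProdKer {R V W : Type*} [Ring R] [AddCommGroup V] [Module R V] [AddCommGroup W]
    [Module R W] (i : W →ₗ[R] V) (p : V →ₗ[R] W) (h : ∀ w, p (i w) = w) : V ≃ₗ[R] W × p.ker where
  toFun v := (p v, ⟨v - i (p v), by rw [LinearMap.mem_ker, map_sub, h, sub_self]⟩)
  invFun w := i w.1 + w.2
  map_add' v w := by
    ext
    · exact map_add p v w
    · simp only [map_add, Prod.snd_add, Submodule.coe_add]
      abel
  map_smul' r v := by
    ext
    · exact map_smul p r v
    · simp only [map_smul, Prod.smul_snd, RingHom.id_apply, SetLike.val_smul, smul_sub]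
  left_inv v := add_sub_cancel _ _
  right_inv w := by
    have hw : p (i w.1 + w.2) = w.1 := by rw [map_add, h, LinearMap.mem_ker.1 w.2.2, add_zero]
    ext
    · exact hw
    · simp only [hw, add_sub_cancel_left]

theorem expect_lt_expect_of_ssubset {ι k : Type*} [Field k] [LinearOrder k] [IsStrictOrderedRing k]
    {s t : Finset ι} {f : ι → k} (hs : s.Nonempty) (hst : s ⊂ t)
    (hf : ∀ x ∈ s, ∀ y ∈ t, y ∉ s → f y < f x) : 𝔼 x ∈ t, f x < 𝔼 x ∈ s, f x := by
  classical
  set m := 𝔼 x ∈ s, f x with hm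
  have ht : (0 : k) < t.card := Nat.cast_pos.2 (Finset.card_pos.2 (hs.mono hst.subset))
  have hsum_s : ∑ x ∈ s, (f x - m) = 0 := by
    rw [Finset.sum_sub_distrib, Finset.sum_const, nsmul_eq_mul, hm,
      Finset.card_mul_expect, sub_self]
  have hsum_sdiff : ∑ y ∈ t \ s, (f y - m) < 0 :=
    Finset.sum_neg (fun y hy => by
      rw [Finset.mem_sdiff] at hy
      obtain ⟨x, hx, hxm⟩ := Finset.exists_le_of_expect_le hs hm.ge
      exact sub_neg.2 ((hf x hx y hy.1 hy.2).trans_le hxm)) (Finset.sdiff_nonempty.2 hst.not_subset)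
  have hsum_t : t.card * (𝔼 x ∈ t, f x - m) < 0 := by
    rw [mul_sub, Finset.card_mul_expect, ← nsmul_eq_mul, ← Finset.sum_const,
      ← Finset.sum_sub_distrib, ← Finset.sum_sdiff hst.subset, hsum_s, add_zero]
    exact hsum_sdiff
  exact sub_neg.1 (neg_of_mul_neg_right hsum_t ht.le)

/- Triangularity: only `j ≥ i` can satisfy `r i j`, so a `key`-maximal member of one list is forced
into the other. -/
theorem perm_of_countP_eq {ι κ : Type*} [LinearOrder κ] {key : ι → κ}
    (hkey : Function.Injective key) {r : ι → ι → Prop} [∀ i, DecidablePred (r i)]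
    (hrefl : ∀ i, r i i) (hle : ∀ i j, r i j → key i ≤ key j) {L L' : List ι}
    (h : ∀ i, L.countP (r i ·) = L'.countP (r i ·)) : L.Perm L' := by
  classical
  have dominated {L L' : List ι} (h : ∀ i, L.countP (r i ·) = L'.countP (r i ·)) {i : ι}
      (hi : i ∈ L) : ∃ j ∈ L', key i ≤ key j := by
    have hpos : 0 < L'.countP (r i ·) :=
      h i ▸ List.countP_pos_iff.2 ⟨i, hi, decide_eq_true (hrefl i)⟩
    obtain ⟨j, hj, hij⟩ := List.countP_pos_iff.1 hpos
    exact ⟨j, hj, hle i j (of_decide_eq_true hij)⟩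
  induction hn : L.length generalizing L L' with
  | zero =>
    obtain rfl := List.eq_nil_of_length_eq_zero hn
    obtain rfl : L' = [] := List.eq_nil_iff_forall_not_mem.2 fun i hi => by
      obtain ⟨j, hj, -⟩ := dominated (fun i => (h i).symm) hi
      exact List.not_mem_nil hj
    rfl
  | succ n ih =>
    obtain ⟨i, hi, hmax⟩ := (List.finite_toSet L).exists_maximalFor key _
      (List.exists_mem_of_length_pos (hn ▸ n.succ_pos))
    obtain ⟨j, hj, hij⟩ := dominated h hi
    obtain ⟨k, hk, hjk⟩ := dominated (fun i => (h i).symm) hj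
    have hi' : i ∈ L' := hkey (hij.antisymm (hjk.trans (hmax hk (hij.trans hjk)))) ▸ hj
    have hL := List.perm_cons_erase hi
    have hL' := List.perm_cons_erase hi'
    refine hL.trans (List.Perm.trans (.cons i (ih (fun m => ?_) ?_)) hL'.symm)
    · have hm := h m
      rw [hL.countP_eq, hL'.countP_eq, List.countP_cons, List.countP_cons] at hm
      exact Nat.add_right_cancel hm
    · rw [List.length_erase_of_mem hi, hn, Nat.add_sub_cancel]

namespace QRep

section Morphisms

variable {Q₀ Q₁ : Type} {σ τ : Q₁ → Q₀} {K : Type} [Field K] {M N P : QRep Q₀ Q₁ σ τ K}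

/-- A morphism of quiver representations. -/
structure Hom (M N : QRep Q₀ Q₁ σ τ K) where
  g : ∀ x, M.V x →ₗ[K] N.V x
  comm : ∀ e v, g (τ e) (M.f e v) = N.f e (g (σ e) v)

theorem IsSubrep.apply_mem {W : ∀ x, Submodule K (M.V x)} (h : IsSubrep M W) {e : Q₁}
    {v : M.V (σ e)} (hv : v ∈ W (σ e)) : M.f e v ∈ W (τ e) :=
  h e ⟨v, hv, rfl⟩

theorem isSubrep_bot (M : QRep Q₀ Q₁ σ τ K) : IsSubrep M ⊥ := fun e => by
  simp only [Pi.bot_apply, Submodule.map_bot, le_refl]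

theorem isSubrep_top (M : QRep Q₀ Q₁ σ τ K) : IsSubrep M ⊤ := fun _ => le_top

theorem IsSubrep.inf {A B : ∀ x, Submodule K (M.V x)} (hA : IsSubrep M A) (hB : IsSubrep M B) :
    IsSubrep M (A ⊓ B) := fun e =>
  (Submodule.map_inf_le _).trans (inf_le_inf (hA e) (hB e))

theorem IsSubrep.sup {A B : ∀ x, Submodule K (M.V x)} (hA : IsSubrep M A) (hB : IsSubrep M B) :
    IsSubrep M (A ⊔ B) := fun e => by
  simpa only [Pi.sup_apply, Submodule.map_sup] using sup_le_sup (hA e) (hB e)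

theorem IsSubrep.map (φ : Hom M N) {W : ∀ x, Submodule K (M.V x)} (hW : IsSubrep M W) :
    IsSubrep N fun x => (W x).map (φ.g x) := by
  rintro e _ ⟨_, ⟨v, hv, rfl⟩, rfl⟩
  exact ⟨M.f e v, hW.apply_mem hv, φ.comm e v⟩

theorem IsSubrep.comap (φ : Hom M N) {W : ∀ x, Submodule K (N.V x)} (hW : IsSubrep N W) :
    IsSubrep M fun x => (W x).comap (φ.g x) := by
  rintro e _ ⟨v, hv, rfl⟩
  rw [Submodule.mem_comap, φ.comm]
  exact hW.apply_mem hv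

theorem Hom.isSubrep_ker (φ : Hom M N) : IsSubrep M fun x => (φ.g x).ker :=
  (isSubrep_bot N).comap φ

namespace Hom

/-- The inclusion of the left summand of a direct sum. -/
def inl (M N : QRep Q₀ Q₁ σ τ K) : Hom M (prodRep M N) where
  g x := LinearMap.inl K (M.V x) (N.V x)
  comm e _ := Prod.ext rfl (map_zero (N.f e)).symm

/-- The inclusion of the right summand of a direct sum. -/
def inr (M N : QRep Q₀ Q₁ σ τ K) : Hom N (prodRep M N) where
  g x := LinearMap.inr K (M.V x) (N.V x)
  comm e _ := Prod.ext (map_zero (M.f e)).symm rfl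

/-- The projection to the left summand of a direct sum. -/
def fst (M N : QRep Q₀ Q₁ σ τ K) : Hom (prodRep M N) M where
  g x := LinearMap.fst K (M.V x) (N.V x)
  comm _ _ := rfl

/-- The projection to the right summand of a direct sum. -/
def snd (M N : QRep Q₀ Q₁ σ τ K) : Hom (prodRep M N) N where
  g x := LinearMap.snd K (M.V x) (N.V x)
  comm _ _ := rfl

end Hom

namespace RepIso

/-- The identity isomorphism. -/
def refl (M : QRep Q₀ Q₁ σ τ K) : RepIso M M :=
  ⟨fun _ => LinearEquiv.refl K _, fun _ _ => rfl⟩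

/-- The inverse isomorphism. -/
def symm (φ : RepIso M N) : RepIso N M :=
  ⟨fun x => (φ.g x).symm, fun e v => by
    rw [LinearEquiv.symm_apply_eq, φ.comm, LinearEquiv.apply_symm_apply]⟩

/-- The composite of two isomorphisms. -/
def trans (φ : RepIso M N) (ψ : RepIso N P) : RepIso M P :=
  ⟨fun x => (φ.g x).trans (ψ.g x), fun e v => by
    simp only [LinearEquiv.trans_apply, φ.comm, ψ.comm]⟩

/-- The morphism underlying an isomorphism. -/
def toHom (φ : RepIso M N) : Hom M N :=
  ⟨fun x => φ.g x, φ.comm⟩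

/-- The isomorphism of direct sums induced by an isomorphism of right summands. -/
def prodCongrRight (P : QRep Q₀ Q₁ σ τ K) (φ : RepIso M N) :
    RepIso (prodRep P M) (prodRep P N) :=
  ⟨fun x => (LinearEquiv.refl K (P.V x)).prodCongr (φ.g x), fun e v =>
    Prod.ext rfl (φ.comm e v.2)⟩

/-- The exchange of the first two summands of a threefold direct sum. -/
def prodLeftComm (M N P : QRep Q₀ Q₁ σ τ K) :
    RepIso (prodRep M (prodRep N P)) (prodRep N (prodRep M P)) where
  g _ :=
    { toFun := fun v => (v.2.1, v.1, v.2.2)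
      invFun := fun v => (v.2.1, v.1, v.2.2)
      map_add' := fun _ _ => rfl
      map_smul' := fun _ _ => rfl }
  comm _ _ := rfl

theorem f_eq_zero (φ : RepIso M N) {e : Q₁} (h : N.f e = 0) : M.f e = 0 := by
  ext v
  rw [LinearMap.zero_apply, ← (φ.g (τ e)).map_eq_zero_iff, φ.comm, h, LinearMap.zero_apply]

theorem dimVec_eq (φ : RepIso M N) (x : Q₀) : dimVec M x = dimVec N x :=
  (φ.g x).finrank_eq

/-- A representation splits as the image of a retraction plus its kernel. -/
def ofRetraction (i : Hom P M) (p : Hom M P) (h : ∀ x w, p.g x (i.g x w) = w) :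
    RepIso M (prodRep P (subrep M _ p.isSubrep_ker)) where
  g x := equivProdKer (i.g x) (p.g x) (h x)
  comm e m := Prod.ext (p.comm e m) <| Subtype.ext <| by
    change M.f e m - i.g (τ e) (p.g (τ e) (M.f e m)) = M.f e (m - i.g (σ e) (p.g (σ e) m))
    rw [map_sub, p.comm, i.comm]

end RepIso

theorem dimVec_prodRep (M N : QRep Q₀ Q₁ σ τ K) (x : Q₀) :
    dimVec (prodRep M N) x = dimVec M x + dimVec N x :=
  Module.finrank_prod

/-- The direct sum of families of subspaces of `M` and `N`, as a family of subspaces of `M ⊕ N`. -/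
def prodFamily (A : ∀ x, Submodule K (M.V x)) (B : ∀ x, Submodule K (N.V x)) :
    ∀ x, Submodule K ((prodRep M N).V x) :=
  fun x => (A x).prod (B x)

theorem finrank_prodFamily (A : ∀ x, Submodule K (M.V x)) (B : ∀ x, Submodule K (N.V x)) (x : Q₀) :
    Module.finrank K (prodFamily A B x) = Module.finrank K (A x) + Module.finrank K (B x) :=
  finrank_submodule_prod (A x) (B x)

end Morphisms

section Weight

variable {Q₀ Q₁ : Type} {σ τ : Q₁ → Q₀} {K : Type} [Field K] [Fintype Q₀]
  {M N P : QRep Q₀ Q₁ σ τ K}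

/-- King's weight of a family of subspaces: the pairing of `θ` with its dimension vector. -/
noncomputable def weight (θ : Q₀ → ℝ) (M : QRep Q₀ Q₁ σ τ K) (W : ∀ x, Submodule K (M.V x)) : ℝ :=
  ∑ x, θ x * Module.finrank K (W x)

theorem weight_bot (θ : Q₀ → ℝ) (M : QRep Q₀ Q₁ σ τ K) : weight θ M ⊥ = 0 := by
  simp only [weight, Pi.bot_apply, finrank_bot, Nat.cast_zero, mul_zero, Finset.sum_const_zero]

theorem weight_sup_add_weight_inf (θ : Q₀ → ℝ) (A B : ∀ x, Submodule K (M.V x)) :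
    weight θ M (A ⊔ B) + weight θ M (A ⊓ B) = weight θ M A + weight θ M B := by
  simp only [weight, ← Finset.sum_add_distrib, ← mul_add, Pi.sup_apply, Pi.inf_apply]
  exact_mod_cast Finset.sum_congr rfl fun x _ => by
    rw [← Submodule.finrank_sup_add_finrank_inf_eq (A x) (B x)]

theorem weight_eq_weight_comap_add_weight_map (θ : Q₀ → ℝ) {i : Hom P M} {p : Hom M N}
    (hi : ∀ x, Function.Injective (i.g x)) (hip : ∀ x, (i.g x).range = (p.g x).ker)
    (Z : ∀ x, Submodule K (M.V x)) :
    weight θ M Z =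
      weight θ P (fun x => (Z x).comap (i.g x)) + weight θ N (fun x => (Z x).map (p.g x)) := by
  simp only [weight, ← Finset.sum_add_distrib, ← mul_add]
  exact_mod_cast Finset.sum_congr rfl fun x _ => by
    rw [finrank_comap_add_finrank_map (hi x) (hip x)]

theorem weight_prodRep_eq_comap_inl_add_map_snd (θ : Q₀ → ℝ)
    (Z : ∀ x, Submodule K ((prodRep M N).V x)) :
    weight θ (prodRep M N) Z = weight θ M (fun x => (Z x).comap ((Hom.inl M N).g x)) +
      weight θ N (fun x => (Z x).map ((Hom.snd M N).g x)) :=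
  weight_eq_weight_comap_add_weight_map θ (fun _ => LinearMap.inl_injective)
    (fun _ => LinearMap.range_inl K _ _) Z

theorem weight_prodRep_eq_comap_inr_add_map_fst (θ : Q₀ → ℝ)
    (Z : ∀ x, Submodule K ((prodRep M N).V x)) :
    weight θ (prodRep M N) Z = weight θ N (fun x => (Z x).comap ((Hom.inr M N).g x)) +
      weight θ M (fun x => (Z x).map ((Hom.fst M N).g x)) :=
  weight_eq_weight_comap_add_weight_map θ (fun _ => LinearMap.inr_injective)
    (fun _ => LinearMap.range_inr K _ _) Z

theorem weight_prodFamily (θ : Q₀ → ℝ) (A : ∀ x, Submodule K (M.V x))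
    (B : ∀ x, Submodule K (N.V x)) :
    weight θ (prodRep M N) (prodFamily A B) = weight θ M A + weight θ N B := by
  simp only [weight, finrank_prodFamily, Nat.cast_add, mul_add, Finset.sum_add_distrib]

theorem weight_map (θ : Q₀ → ℝ) (φ : RepIso M N) (A : ∀ x, Submodule K (M.V x)) :
    weight θ N (fun x => (A x).map (φ.toHom.g x)) = weight θ M A :=
  Finset.sum_congr rfl fun x _ => by
    rw [← LinearEquiv.finrank_map_eq (φ.g x)]
    rfl

/-- The largest element `H` among the subrepresentations of maximal `θ`-weight; for `θ = α - t` it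
is the part of slope at least `t` of the Harder–Narasimhan filtration along `α`. -/
structure IsLargestMaximizer (θ : Q₀ → ℝ) (M : QRep Q₀ Q₁ σ τ K)
    (H : ∀ x, Submodule K (M.V x)) : Prop where
  isSubrep : IsSubrep M H
  weight_le : ∀ Z, IsSubrep M Z → weight θ M Z ≤ weight θ M H
  le_of_weight_le : ∀ Z, IsSubrep M Z → weight θ M H ≤ weight θ M Z → Z ≤ H

namespace IsLargestMaximizer

variable {θ : Q₀ → ℝ} {H H' : ∀ x, Submodule K (M.V x)}

theorem unique (h : IsLargestMaximizer θ M H) (h' : IsLargestMaximizer θ M H') : H = H' :=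
  le_antisymm (h'.le_of_weight_le H h.isSubrep (h.weight_le H' h'.isSubrep))
    (h.le_of_weight_le H' h'.isSubrep (h'.weight_le H h.isSubrep))

theorem map (h : IsLargestMaximizer θ M H) (φ : RepIso M N) :
    IsLargestMaximizer θ N fun x => (H x).map (φ.toHom.g x) := by
  have weight_comap (Z : ∀ x, Submodule K (N.V x)) :
      weight θ M (fun x => (Z x).comap (φ.toHom.g x)) = weight θ N Z := by
    rw [← weight_map θ φ]
    congr 1
    funext x
    exact Submodule.map_comap_eq_of_surjective (φ.g x).surjective _
  refine ⟨h.isSubrep.map φ.toHom, fun Z hZ => ?_, fun Z hZ hle x => ?_⟩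
  · rw [weight_map, ← weight_comap]
    exact h.weight_le _ (hZ.comap φ.toHom)
  · rw [weight_map, ← weight_comap] at hle
    rw [← Submodule.map_comap_eq_of_surjective (φ.g x).surjective (Z x)]
    exact Submodule.map_mono (h.le_of_weight_le _ (hZ.comap φ.toHom) hle x)

theorem finrank_eq {H' : ∀ x, Submodule K (N.V x)} (h : IsLargestMaximizer θ M H)
    (h' : IsLargestMaximizer θ N H') (φ : RepIso M N) (x : Q₀) :
    Module.finrank K (H x) = Module.finrank K (H' x) := by
  rw [h'.unique (h.map φ)]
  exact (LinearEquiv.finrank_map_eq (φ.g x) (H x)).symm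

theorem prod {H' : ∀ x, Submodule K (N.V x)} (h : IsLargestMaximizer θ M H)
    (h' : IsLargestMaximizer θ N H') :
    IsLargestMaximizer θ (prodRep M N) (prodFamily H H') where
  isSubrep := by
    rintro e _ ⟨v, hv, rfl⟩
    exact ⟨h.isSubrep.apply_mem hv.1, h'.isSubrep.apply_mem hv.2⟩
  weight_le Z hZ := by
    rw [weight_prodFamily, weight_prodRep_eq_comap_inl_add_map_snd]
    exact add_le_add (h.weight_le _ (hZ.comap (Hom.inl M N)))
      (h'.weight_le _ (hZ.map (Hom.snd M N)))
  le_of_weight_le Z hZ hle x v hv := by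
    rw [weight_prodFamily] at hle
    have hfst := h.le_of_weight_le _ (hZ.map (Hom.fst M N)) <| by
      linarith [weight_prodRep_eq_comap_inr_add_map_fst θ Z,
        h'.weight_le _ (hZ.comap (Hom.inr M N))]
    have hsnd := h'.le_of_weight_le _ (hZ.map (Hom.snd M N)) <| by
      linarith [weight_prodRep_eq_comap_inl_add_map_snd θ Z,
        h.weight_le _ (hZ.comap (Hom.inl M N))]
    exact ⟨hfst x ⟨v, hv, rfl⟩, hsnd x ⟨v, hv, rfl⟩⟩

end IsLargestMaximizer

end Weight

section HarderNarasimhan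

variable {Q₀ Q₁ : Type} {σ τ : Q₁ → Q₀} {K : Type} [Field K] [Fintype Q₀] {α : Q₀ → ℝ}
  {M N : QRep Q₀ Q₁ σ τ K}

theorem sum_sub_mul_eq (α : Q₀ → ℝ) (t : ℝ) (d : Q₀ → ℕ) :
    ∑ x, (α x - t) * (d x : ℝ) = (slopeVec α d - t) * ∑ x, (d x : ℝ) := by
  simp only [sub_mul, Finset.sum_sub_distrib, ← Finset.mul_sum]
  congr 1
  refine (div_mul_cancel_of_imp fun h => Finset.sum_eq_zero fun x hx => ?_).symm
  rw [(Finset.sum_eq_zero_iff_of_nonneg fun _ _ => Nat.cast_nonneg _).1 h x hx, mul_zero]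

theorem weight_sub_weight (α : Q₀ → ℝ) (t : ℝ) {A B : ∀ x, Submodule K (M.V x)} (h : A ≤ B) :
    weight (α · - t) M B - weight (α · - t) M A =
      (slopeVec α (quotDimVec M A B) - t) * ∑ x, (quotDimVec M A B x : ℝ) := by
  rw [← sum_sub_mul_eq, weight, weight, ← Finset.sum_sub_distrib]
  refine Finset.sum_congr rfl fun x _ => ?_
  rw [quotDimVec, Nat.cast_sub (Submodule.finrank_mono (h x)), mul_sub]

theorem sum_quotDimVec_pos {A B : ∀ x, Submodule K (M.V x)} (h : A < B) :
    0 < ∑ x, (quotDimVec M A B x : ℝ) := by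
  obtain ⟨-, x, hx⟩ := Pi.lt_def.1 h
  exact Finset.sum_pos' (fun _ _ => Nat.cast_nonneg _) ⟨x, Finset.mem_univ x,
    Nat.cast_pos.2 (Nat.sub_pos_of_lt (Submodule.finrank_lt_finrank_of_lt hx))⟩

namespace SemistableQuot

variable {A B Z : ∀ x, Submodule K (M.V x)} {t : ℝ}

theorem weight_sub_weight_le (hss : SemistableQuot α M A B) (hZ : IsSubrep M Z) (hAZ : A ≤ Z)
    (hZB : Z ≤ B) (t : ℝ) :
    weight (α · - t) M Z - weight (α · - t) M A ≤
      (slopeVec α (quotDimVec M A B) - t) * ∑ x, (quotDimVec M A Z x : ℝ) := by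
  rcases hAZ.eq_or_lt with rfl | hlt
  · simp only [quotDimVec, sub_self, Nat.sub_self, Nat.cast_zero, Finset.sum_const_zero, mul_zero,
      le_refl]
  · rw [weight_sub_weight α t hAZ]
    gcongr
    exact hss Z hZ hAZ hZB (Function.ne_iff.1 hlt.ne')

theorem weight_le (hss : SemistableQuot α M A B) (hZ : IsSubrep M Z) (hAZ : A ≤ Z) (hZB : Z ≤ B)
    (ht : t ≤ slopeVec α (quotDimVec M A B)) :
    weight (α · - t) M Z ≤ weight (α · - t) M B := by
  rw [← sub_le_sub_iff_right (weight (α · - t) M A), weight_sub_weight α t (hAZ.trans hZB)]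
  refine (hss.weight_sub_weight_le hZ hAZ hZB t).trans <|
    mul_le_mul_of_nonneg_left (Finset.sum_le_sum fun x _ => ?_) (sub_nonneg.2 ht)
  exact Nat.cast_le.2 (Nat.sub_le_sub_right (Submodule.finrank_mono (hZB x)) _)

theorem weight_lt (hss : SemistableQuot α M A B) (hZ : IsSubrep M Z) (hAZ : A < Z) (hZB : Z ≤ B)
    (ht : slopeVec α (quotDimVec M A B) < t) :
    weight (α · - t) M Z < weight (α · - t) M A :=
  sub_neg.1 <| (hss.weight_sub_weight_le hZ hAZ.le hZB t).trans_lt <|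
    mul_neg_of_neg_of_pos (sub_neg.2 ht) (sum_quotDimVec_pos hAZ)

end SemistableQuot

namespace HNFiltration

/-- The slope of the `i`-th successive quotient. -/
noncomputable def stepSlope (F : HNFiltration α M) (i : Fin F.n) : ℝ :=
  slopeVec α (quotDimVec M (F.W i.castSucc) (F.W i.succ))

variable (F : HNFiltration α M) {t : ℝ} {k : Fin (F.n + 1)} {Z : ∀ x, Submodule K (M.V x)}

theorem monotone_W : Monotone F.W :=
  Fin.monotone_iff_le_succ.2 F.mono

theorem strictAnti_stepSlope : StrictAnti F.stepSlope := fun i j => F.dec i j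

theorem exists_castSucc_lt_iff_le_stepSlope (t : ℝ) :
    ∃ k : Fin (F.n + 1), ∀ i : Fin F.n, i.castSucc < k ↔ t ≤ F.stepSlope i := by
  obtain ⟨k, hk⟩ := (Set.toFinite
    {k : Fin (F.n + 1) | ∀ i : Fin F.n, i.castSucc < k → t ≤ F.stepSlope i}).exists_maximal
    ⟨0, fun i hi => absurd hi (Fin.not_lt_zero _)⟩
  refine ⟨k, fun i => ⟨hk.prop i, fun hi => ?_⟩⟩
  by_contra! hki
  have hsucc : i.succ ≤ k := hk.le_of_ge
    (fun j hj => hi.trans (F.strictAnti_stepSlope.antitone (Fin.castSucc_lt_succ_iff.1 hj)))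
    (hki.trans Fin.castSucc_lt_succ.le)
  exact (hsucc.trans hki).not_gt Fin.castSucc_lt_succ

theorem finrank_W_eq_sum (k : Fin (F.n + 1)) (x : Q₀) :
    Module.finrank K (F.W k x) =
      ∑ i : Fin F.n with i.castSucc < k, quotDimVec M (F.W i.castSucc) (F.W i.succ) x := by
  induction k using Fin.induction with
  | zero =>
    rw [F.bot, finrank_bot]
    simp only [Fin.not_lt_zero, Finset.filter_false, Finset.sum_empty]
  | succ k ih =>
    have hfilter : (Finset.univ.filter fun i : Fin F.n => i.castSucc < k.succ) =
        insert k (Finset.univ.filter fun i : Fin F.n => i.castSucc < k.castSucc) := by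
      ext i
      simp only [Finset.mem_filter, Finset.mem_univ, true_and, Finset.mem_insert,
        Fin.castSucc_lt_castSucc_iff, Fin.castSucc_lt_succ_iff, le_iff_eq_or_lt]
    rw [hfilter, Finset.sum_insert (by simp), ← ih, quotDimVec,
      Nat.sub_add_cancel (Submodule.finrank_mono (F.mono k x))]

theorem weight_inf_succ_add_weight (θ : Q₀ → ℝ) (Z : ∀ x, Submodule K (M.V x)) (i : Fin F.n) :
    weight θ M (Z ⊓ F.W i.succ) + weight θ M (F.W i.castSucc) =
      weight θ M (Z ⊓ F.W i.succ ⊔ F.W i.castSucc) + weight θ M (Z ⊓ F.W i.castSucc) := by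
  have hmono : F.W i.castSucc ≤ F.W i.succ := F.mono i
  rw [← weight_sup_add_weight_inf, inf_assoc, inf_eq_right.2 hmono]

theorem weight_inf_succ_add_weight_le (hZ : IsSubrep M Z) {i : Fin F.n} (ht : t ≤ F.stepSlope i) :
    weight (α · - t) M (Z ⊓ F.W i.succ) + weight (α · - t) M (F.W i.castSucc) ≤
      weight (α · - t) M (F.W i.succ) + weight (α · - t) M (Z ⊓ F.W i.castSucc) := by
  rw [weight_inf_succ_add_weight]
  gcongr
  exact (F.ss i).weight_le ((hZ.inf (F.subrep _)).sup (F.subrep _)) le_sup_right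
    (sup_le inf_le_right (F.mono i)) ht

theorem weight_inf_succ_lt (hZ : IsSubrep M Z) {i : Fin F.n} (ht : F.stepSlope i < t)
    (hne : ¬Z ⊓ F.W i.succ ≤ F.W i.castSucc) :
    weight (α · - t) M (Z ⊓ F.W i.succ) < weight (α · - t) M (Z ⊓ F.W i.castSucc) := by
  have hlt := (F.ss i).weight_lt ((hZ.inf (F.subrep _)).sup (F.subrep _)) (right_lt_sup.2 hne)
    (sup_le inf_le_right (F.mono i)) ht
  linarith [F.weight_inf_succ_add_weight (α · - t) Z i]

theorem weight_inf_le_of_forall_le_stepSlope (hZ : IsSubrep M Z)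
    (hk : ∀ i : Fin F.n, i.castSucc < k → t ≤ F.stepSlope i) :
    weight (α · - t) M (Z ⊓ F.W k) ≤ weight (α · - t) M (F.W k) := by
  induction k using Fin.induction with
  | zero => rw [show F.W 0 = ⊥ from funext F.bot, inf_bot_eq]
  | succ k ih =>
    have hstep := F.weight_inf_succ_add_weight_le hZ (hk k Fin.castSucc_lt_succ)
    have hpred := ih fun i hi => hk i (hi.trans Fin.castSucc_lt_succ)
    linarith

theorem inf_le_of_weight_le (hZ : IsSubrep M Z)
    (hk : ∀ i : Fin F.n, k ≤ i.castSucc → F.stepSlope i < t) {j : Fin (F.n + 1)} (hkj : k ≤ j)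
    (hle : weight (α · - t) M (Z ⊓ F.W k) ≤ weight (α · - t) M (Z ⊓ F.W j)) :
    Z ⊓ F.W j ≤ F.W k := by
  induction j using Fin.induction with
  | zero => exact inf_le_right.trans (F.monotone_W (Fin.zero_le k))
  | succ j ih =>
    rcases hkj.eq_or_lt with rfl | hlt
    · exact inf_le_right
    have hkj : k ≤ j.castSucc := Fin.le_castSucc_iff.2 hlt
    by_cases hj : Z ⊓ F.W j.succ ≤ F.W j.castSucc
    · have heq : Z ⊓ F.W j.succ = Z ⊓ F.W j.castSucc :=
        le_antisymm (le_inf inf_le_left hj) (inf_le_inf_left Z (F.mono j))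
      rw [heq] at hle ⊢
      exact ih hkj hle
    · have hdrop := F.weight_inf_succ_lt hZ (hk j hkj) hj
      have heq : Z ⊓ F.W j.castSucc = Z ⊓ F.W k :=
        le_antisymm (le_inf inf_le_left (ih hkj (hle.trans hdrop.le)))
          (inf_le_inf_left Z (F.monotone_W hkj))
      exact absurd (heq ▸ hdrop) hle.not_gt

theorem isLargestMaximizer_W (hk : ∀ i : Fin F.n, i.castSucc < k ↔ t ≤ F.stepSlope i) :
    IsLargestMaximizer (α · - t) M (F.W k) := by
  have htop (Z : ∀ x, Submodule K (M.V x)) : Z ⊓ F.W (Fin.last F.n) = Z := by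
    rw [show F.W (Fin.last F.n) = ⊤ from funext F.top, inf_top_eq]
  have hbelow (Z) (hZ : IsSubrep M Z) :
      weight (α · - t) M (Z ⊓ F.W k) ≤ weight (α · - t) M (F.W k) :=
    F.weight_inf_le_of_forall_le_stepSlope hZ fun i => (hk i).1
  have habove (Z) (hZ : IsSubrep M Z)
      (hle : weight (α · - t) M (F.W k) ≤ weight (α · - t) M Z) : Z ≤ F.W k := by
    rw [← htop Z] at hle ⊢
    refine F.inf_le_of_weight_le hZ (fun i hi => ?_) (Fin.le_last k) ((hbelow Z hZ).trans hle)
    rwa [← not_le, ← hk, not_lt]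
  refine ⟨F.subrep k, fun Z hZ => ?_, habove⟩
  by_contra! hlt
  have hle := hbelow Z hZ
  rw [inf_eq_left.2 (habove Z hZ hlt.le)] at hle
  exact hle.not_gt hlt

theorem finsum_typeFun (t : ℝ) (x : Q₀) :
    ∑ᶠ s ∈ Set.Ici t, F.typeFun s x =
      ∑ i with t ≤ F.stepSlope i, quotDimVec M (F.W i.castSucc) (F.W i.succ) x := by
  let c (i : Fin F.n) : ℝ → ℕ := fun s =>
    if F.stepSlope i = s then quotDimVec M (F.W i.castSucc) (F.W i.succ) x else 0
  have hc (i : Fin F.n) (s : ℝ) (hs : s ≠ F.stepSlope i) : (Set.Ici t).indicator (c i) s = 0 :=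
    Set.indicator_apply_eq_zero.2 fun _ => if_neg hs.symm
  have htype : (fun s => F.typeFun s x) = ∑ i, c i :=
    funext fun s => (Finset.sum_apply s Finset.univ c).symm
  calc ∑ᶠ s ∈ Set.Ici t, F.typeFun s x
      = ∑ᶠ s, ∑ i, (Set.Ici t).indicator (c i) s := by
        rw [finsum_mem_def, htype, Finset.indicator_sum]
        simp only [Finset.sum_apply]
    _ = ∑ i, ∑ᶠ s, (Set.Ici t).indicator (c i) s := finsum_sum_comm _ _ fun i _ =>
        (Set.finite_singleton (F.stepSlope i)).subset fun s hs => not_not.1 (mt (hc i s) hs)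
    _ = ∑ i, (Set.Ici t).indicator (c i) (F.stepSlope i) :=
        Finset.sum_congr rfl fun i _ => finsum_eq_single _ _ (hc i)
    _ = _ := by
        simp only [c, Set.indicator_apply, Set.mem_Ici, if_true, Finset.sum_filter]

end HNFiltration

theorem SameHNType.exists_isLargestMaximizer (h : SameHNType α M N) (t : ℝ) :
    ∃ H H', IsLargestMaximizer (α · - t) M H ∧ IsLargestMaximizer (α · - t) N H' ∧
      ∀ x, Module.finrank K (H x) = Module.finrank K (H' x) := by
  obtain ⟨F, G, hFG⟩ := h
  obtain ⟨k, hk⟩ := F.exists_castSucc_lt_iff_le_stepSlope t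
  obtain ⟨l, hl⟩ := G.exists_castSucc_lt_iff_le_stepSlope t
  refine ⟨F.W k, G.W l, F.isLargestMaximizer_W hk, G.isLargestMaximizer_W hl, fun x => ?_⟩
  simp only [HNFiltration.finrank_W_eq_sum, hk, hl, ← HNFiltration.finsum_typeFun, hFG]

end HarderNarasimhan

section Thin

variable {Q₀ Q₁ : Type} {σ τ : Q₁ → Q₀} {K : Type} [Field K] [DecidableEq Q₀]

/-- The coordinate on `PLift p → K`, which is `K` when `p` holds and trivial otherwise. -/
def pliftCoord (K : Type) [Field K] (p : Prop) [Decidable p] : (PLift p → K) →ₗ[K] K where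
  toFun v := if h : p then v ⟨h⟩ else 0
  map_add' v w := by
    simp only [Pi.add_apply]
    split_ifs <;> simp only [add_zero]
  map_smul' r v := by
    simp only [Pi.smul_apply, smul_dite, smul_zero, RingHom.id_apply]

theorem pliftCoord_const (p : Prop) [Decidable p] (r : K) :
    pliftCoord K p (fun _ => r) = if p then r else 0 := rfl

theorem pliftCoord_of_not {p : Prop} [Decidable p] (h : ¬p) (v : PLift p → K) :
    pliftCoord K p v = 0 :=
  dif_neg h

theorem pliftCoord_eq {p : Prop} [Decidable p] (v : PLift p → K) (q : PLift p) :
    pliftCoord K p v = v q :=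
  dif_pos q.down

/-- The thin representation with a one-dimensional space at each vertex of `S`, on which the edge
`e` acts as multiplication by `c e`. The space at `x` is modelled as `PLift (x ∈ S) → K`. -/
def thinRep (S : Finset Q₀) (c : Q₁ → K) : QRep Q₀ Q₁ σ τ K where
  V x := PLift (x ∈ S) → K
  f e := LinearMap.pi fun _ => c e • pliftCoord K (σ e ∈ S)

variable {S : Finset Q₀} {c : Q₁ → K} {x : Q₀}

theorem thinRep_f_apply (e : Q₁) (v : (thinRep (τ := τ) S c).V (σ e)) (q : PLift (τ e ∈ S)) :
    (thinRep S c).f e v q = c e * pliftCoord K (σ e ∈ S) v := rfl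

theorem thinRep_f_eq_zero {e : Q₁} (he : c e = 0) :
    (thinRep (σ := σ) (τ := τ) S c).f e = 0 :=
  LinearMap.ext fun v => funext fun q => by
    rw [thinRep_f_apply, he, zero_mul]
    rfl

theorem thinRep_f_eq_zero_iff {e : Q₁} (hσ : σ e ∈ S) (hτ : τ e ∈ S) :
    (thinRep (σ := σ) (τ := τ) S c).f e = 0 ↔ c e = 0 := by
  refine ⟨fun h => ?_, thinRep_f_eq_zero⟩
  have hone : c e * pliftCoord K (σ e ∈ S) (fun _ => 1) = 0 :=
    congrFun (LinearMap.congr_fun h fun _ => 1) (⟨hτ⟩ : PLift (τ e ∈ S))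
  rwa [pliftCoord_const, if_pos hσ, mul_one] at hone

theorem subsingleton_thinRep_V (hx : x ∉ S) :
    Subsingleton ((thinRep (σ := σ) (τ := τ) S c).V x) :=
  ⟨fun _ _ => funext fun q => absurd q.down hx⟩

theorem finrank_thinRep_V (x : Q₀) :
    Module.finrank K ((thinRep (σ := σ) (τ := τ) S c).V x) = if x ∈ S then 1 else 0 := by
  split_ifs with hx
  · have : Unique (PLift (x ∈ S)) := ⟨⟨⟨hx⟩⟩, fun _ => rfl⟩
    exact (Module.finrank_fintype_fun_eq_card K).trans Fintype.card_unique
  · have := subsingleton_thinRep_V (σ := σ) (τ := τ) (c := c) hx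
    exact Module.finrank_zero_of_subsingleton

theorem nontrivial_thinRep_V (hx : x ∈ S) :
    Nontrivial ((thinRep (σ := σ) (τ := τ) S c).V x) :=
  Module.nontrivial_of_finrank_pos (R := K) (by rw [finrank_thinRep_V, if_pos hx]; exact one_pos)

variable {M : QRep Q₀ Q₁ σ τ K}

/-- The morphism from a thin representation sending the basis vector at `x` to `u x`. -/
def Hom.ofThin (u : ∀ x, M.V x) (hu : ∀ x ∉ S, u x = 0)
    (hf : ∀ e, σ e ∈ S → M.f e (u (σ e)) = c e • u (τ e)) : Hom (thinRep S c) M where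
  g x := (pliftCoord K (x ∈ S)).smulRight (u x)
  comm e v := by
    change pliftCoord K (τ e ∈ S) (fun _ => c e * pliftCoord K (σ e ∈ S) v) • u (τ e) =
      M.f e (pliftCoord K (σ e ∈ S) v • u (σ e))
    rw [map_smul, pliftCoord_const]
    by_cases hσ : σ e ∈ S
    · rw [hf e hσ]
      split_ifs with hτ
      · rw [mul_comm, mul_smul]
      · simp only [hu _ hτ, smul_zero]
    · have hv : pliftCoord K (σ e ∈ S) v = 0 := pliftCoord_of_not hσ v
      simp only [hv, mul_zero, ite_self, zero_smul]

/-- The morphism to a thin representation with coordinates `φ`. -/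
def Hom.toThin (φ : ∀ x, M.V x →ₗ[K] K) (hφ : ∀ x ∉ S, φ x = 0)
    (hf : ∀ e, τ e ∈ S → φ (τ e) ∘ₗ M.f e = c e • φ (σ e)) : Hom M (thinRep S c) where
  g x := LinearMap.pi fun _ => φ x
  comm e v := funext fun q => by
    change φ (τ e) (M.f e v) = c e * pliftCoord K (σ e ∈ S) (fun _ => φ (σ e) v)
    rw [← LinearMap.comp_apply, hf e q.down, pliftCoord_const, LinearMap.smul_apply, smul_eq_mul]
    split_ifs with hσ
    · rfl
    · rw [hφ _ hσ, LinearMap.zero_apply]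

theorem Hom.toThin_ofThin {u : ∀ x, M.V x} (hu : ∀ x ∉ S, u x = 0)
    (hfu : ∀ e, σ e ∈ S → M.f e (u (σ e)) = c e • u (τ e)) {φ : ∀ x, M.V x →ₗ[K] K}
    (hφ : ∀ x ∉ S, φ x = 0) (hfφ : ∀ e, τ e ∈ S → φ (τ e) ∘ₗ M.f e = c e • φ (σ e))
    (hφu : ∀ x ∈ S, φ x (u x) = 1) (x : Q₀) (v : (thinRep (σ := σ) (τ := τ) S c).V x) :
    (Hom.toThin φ hφ hfφ).g x ((Hom.ofThin u hu hfu).g x v) = v := funext fun q => by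
  change φ x (pliftCoord K (x ∈ S) v • u x) = v q
  rw [map_smul, hφu x q.down, smul_eq_mul, mul_one, pliftCoord_eq v q]

end Thin

section Interval

variable {K : Type} [Field K] {ℓ : ℕ} {M : QRep (Fin (ℓ + 1)) (Fin ℓ) Fin.castSucc Fin.succ K}

/-- The interval representation `I[a,b]` of the equioriented quiver, for `I = [a, b]`. -/
abbrev intervalRep (K : Type) [Field K] (I : NonemptyInterval (Fin (ℓ + 1))) :
    QRep (Fin (ℓ + 1)) (Fin ℓ) Fin.castSucc Fin.succ K :=
  thinRep (Finset.Icc I.fst I.snd) 1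

theorem exists_orbit {a : Fin (ℓ + 1)} (v : M.V a) :
    ∃ u : ∀ x, M.V x, (∀ x < a, u x = 0) ∧ u a = v ∧
      ∀ e : Fin ℓ, a ≤ e.castSucc → M.f e (u e.castSucc) = u e.succ := by
  let u : ∀ x, M.V x := fun x => Fin.induction (motive := fun x => M.V x)
    (Pi.single a v 0) (fun e w => Pi.single a v e.succ + M.f e w) x
  have hzero : u 0 = Pi.single a v 0 := rfl
  have hsucc (e : Fin ℓ) : u e.succ = Pi.single a v e.succ + M.f e (u e.castSucc) := rfl
  have hlt : ∀ x < a, u x = 0 := fun x hx => by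
    induction x using Fin.induction with
    | zero => rw [hzero, Pi.single_eq_of_ne hx.ne]
    | succ e ih =>
      rw [hsucc, Pi.single_eq_of_ne hx.ne, ih (Fin.castSucc_lt_succ.trans hx), map_zero, add_zero]
  refine ⟨u, hlt, ?_, fun e he => ?_⟩
  · cases a using Fin.cases with
    | zero => rw [hzero, Pi.single_eq_same]
    | succ e => rw [hsucc, Pi.single_eq_same, hlt _ Fin.castSucc_lt_succ, map_zero, add_zero]
  · rw [hsucc, Pi.single_eq_of_ne (he.trans_lt Fin.castSucc_lt_succ).ne', zero_add]

theorem exists_dual_orbit {b : Fin (ℓ + 1)} (ψ : M.V b →ₗ[K] K) :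
    ∃ φ : ∀ x, M.V x →ₗ[K] K, (∀ x > b, φ x = 0) ∧ φ b = ψ ∧
      ∀ e : Fin ℓ, e.succ ≤ b → φ e.succ ∘ₗ M.f e = φ e.castSucc := by
  let s : ∀ x, M.V x →ₗ[K] K := Function.update 0 b ψ
  have hs_self : s b = ψ := Function.update_self (β := fun x => M.V x →ₗ[K] K) b ψ 0
  have hs_ne (x) (hx : x ≠ b) : s x = 0 :=
    Function.update_of_ne (β := fun x => M.V x →ₗ[K] K) hx ψ 0
  let φ : ∀ x, M.V x →ₗ[K] K := fun x => Fin.reverseInduction (motive := fun x => M.V x →ₗ[K] K)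
    (s (Fin.last ℓ)) (fun e w => s e.castSucc + w ∘ₗ M.f e) x
  have hlast : φ (Fin.last ℓ) = s (Fin.last ℓ) := Fin.reverseInduction_last
  have hcast (e : Fin ℓ) : φ e.castSucc = s e.castSucc + φ e.succ ∘ₗ M.f e :=
    Fin.reverseInduction_castSucc e
  have hgt : ∀ x > b, φ x = 0 := fun x hx => by
    induction x using Fin.reverseInduction with
    | last => rw [hlast, hs_ne _ hx.ne']
    | cast e ih =>
      rw [hcast, hs_ne _ hx.ne', ih (hx.trans Fin.castSucc_lt_succ), LinearMap.zero_comp, add_zero]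
  refine ⟨φ, hgt, ?_, fun e he => ?_⟩
  · cases b using Fin.lastCases with
    | last => rw [hlast, hs_self]
    | cast e =>
      rw [hcast, hs_self, hgt _ Fin.castSucc_lt_succ, LinearMap.zero_comp, add_zero]
  · rw [hcast, hs_ne _ (Fin.castSucc_lt_succ.trans_le he).ne, zero_add]

theorem dual_orbit_apply_orbit_eq_one {a b x : Fin (ℓ + 1)} {u : ∀ x, M.V x}
    {φ : ∀ x, M.V x →ₗ[K] K} (hu : ∀ e : Fin ℓ, a ≤ e.castSucc → M.f e (u e.castSucc) = u e.succ)
    (hφ : ∀ e : Fin ℓ, e.succ ≤ b → φ e.succ ∘ₗ M.f e = φ e.castSucc) (hb : φ b (u b) = 1)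
    (hax : a ≤ x) (hxb : x ≤ b) : φ x (u x) = 1 := by
  induction x using Fin.reverseInduction with
  | last => exact Fin.last_le_iff.1 hxb ▸ hb
  | cast e ih =>
    rcases hxb.eq_or_lt with rfl | hlt
    · exact hb
    · have hsucc : e.succ ≤ b := Fin.castSucc_lt_iff_succ_le.1 hlt
      rw [← hφ e hsucc, LinearMap.comp_apply, hu e hax]
      exact ih (hax.trans Fin.castSucc_lt_succ.le) hsucc

/- The interval starts at the first vertex carrying a nonzero vector and ends where the forward
orbit of that vector dies; a functional detecting the end of the orbit then splits it off. -/
theorem exists_interval_summand (hM : ∃ x, Nontrivial (M.V x)) :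
    ∃ (I : NonemptyInterval (Fin (ℓ + 1))) (N : _),
      Nonempty (RepIso M (prodRep (intervalRep K I) N)) := by
  obtain ⟨a, ha, hmin⟩ := wellFounded_lt.has_min {x | Nontrivial (M.V x)} hM
  have : Nontrivial (M.V a) := ha
  have hbelow (x) (hx : x < a) : Subsingleton (M.V x) :=
    not_nontrivial_iff_subsingleton.1 fun h => hmin x h hx
  obtain ⟨v, hv⟩ := exists_ne (0 : M.V a)
  obtain ⟨u, hu_lt, hua, hu⟩ := exists_orbit v
  obtain ⟨b, hb, hmax⟩ :=
    (Set.toFinite {x | u x ≠ 0}).exists_maximalFor id _ ⟨a, by rwa [← hua] at hv⟩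
  have hu_gt (x) (hx : b < x) : u x = 0 := not_not.1 fun h => (hmax h hx.le).not_gt hx
  have hab : a ≤ b := not_lt.1 fun h => hb (hu_lt b h)
  obtain ⟨ψ, hψ⟩ := Module.Projective.exists_dual_eq_one K hb
  obtain ⟨φ, hφ_gt, rfl, hφ⟩ := exists_dual_orbit ψ
  have hout {x} (hx : x ∉ Finset.Icc a b) : x < a ∨ b < x := by
    rwa [Finset.mem_Icc, not_and_or, not_le, not_le] at hx
  let i : Hom (intervalRep K ⟨(a, b), hab⟩) M :=
    Hom.ofThin u (fun x hx => (hout hx).elim (hu_lt x) (hu_gt x)) fun e he => by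
      rw [hu e (Finset.mem_Icc.1 he).1, Pi.one_apply, one_smul]
  let p : Hom M (intervalRep K ⟨(a, b), hab⟩) :=
    Hom.toThin φ (fun x hx => (hout hx).elim
      (fun h => have := hbelow x h; Subsingleton.elim _ _) (hφ_gt x)) fun e he => by
      rw [hφ e (Finset.mem_Icc.1 he).2, Pi.one_apply, one_smul]
  have hpi : ∀ x w, p.g x (i.g x w) = w := Hom.toThin_ofThin _ _ _ _ fun x hx =>
    dual_orbit_apply_orbit_eq_one hu hφ hψ (Finset.mem_Icc.1 hx).1 (Finset.mem_Icc.1 hx).2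
  exact ⟨_, _, ⟨RepIso.ofRetraction i p hpi⟩⟩

/-- The direct sum of the interval representations in a list. -/
noncomputable def sumIntervals (K : Type) [Field K] : List (NonemptyInterval (Fin (ℓ + 1))) →
    QRep (Fin (ℓ + 1)) (Fin ℓ) Fin.castSucc Fin.succ K
  | [] => thinRep ∅ 1
  | I :: L => prodRep (intervalRep K I) (sumIntervals K L)

/-- Any two zero representations are isomorphic. -/
def RepIso.ofSubsingleton {Q₀ Q₁ : Type} {σ τ : Q₁ → Q₀} {M N : QRep Q₀ Q₁ σ τ K}
    (hM : ∀ x, Subsingleton (M.V x)) (hN : ∀ x, Subsingleton (N.V x)) : RepIso M N where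
  g x :=
    have := hM x
    have := hN x
    LinearEquiv.ofSubsingleton (M.V x) (N.V x)
  comm e _ := (hN (τ e)).elim _ _

theorem exists_repIso_sumIntervals (M : QRep (Fin (ℓ + 1)) (Fin ℓ) Fin.castSucc Fin.succ K) :
    ∃ L, Nonempty (RepIso M (sumIntervals K L)) := by
  induction hd : ∑ x, dimVec M x using Nat.strong_induction_on generalizing M with
  | _ d ih =>
  by_cases hM : ∃ x, Nontrivial (M.V x)
  · obtain ⟨I, N, ⟨φ⟩⟩ := exists_interval_summand hM
    have hI : 0 < ∑ x, dimVec (intervalRep K I) x :=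
      Finset.sum_pos' (fun _ _ => Nat.zero_le _) ⟨I.fst, Finset.mem_univ _, by
        have := nontrivial_thinRep_V (σ := Fin.castSucc) (τ := Fin.succ) (c := (1 : Fin ℓ → K))
          (Finset.left_mem_Icc.2 I.fst_le_snd)
        exact Module.finrank_pos⟩
    have hN : ∑ x, dimVec N x < d := by
      simp only [← hd, φ.dimVec_eq, dimVec_prodRep, Finset.sum_add_distrib]
      exact Nat.lt_add_of_pos_left hI
    obtain ⟨L, ⟨ψ⟩⟩ := ih _ hN N rfl
    exact ⟨I :: L, ⟨φ.trans (ψ.prodCongrRight _)⟩⟩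
  · simp only [not_exists, not_nontrivial_iff_subsingleton] at hM
    exact ⟨[], ⟨RepIso.ofSubsingleton hM fun x => subsingleton_thinRep_V (Finset.notMem_empty x)⟩⟩

theorem nonempty_repIso_sumIntervals_of_perm {L L' : List (NonemptyInterval (Fin (ℓ + 1)))}
    (h : L.Perm L') : Nonempty (RepIso (sumIntervals K L) (sumIntervals K L')) := by
  induction h with
  | nil => exact ⟨RepIso.refl _⟩
  | cons I _ ih => exact ih.map (RepIso.prodCongrRight _)
  | swap I J L => exact ⟨RepIso.prodLeftComm _ _ _⟩
  | trans _ _ ih ih' => exact ⟨ih.some.trans ih'.some⟩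

end Interval

section IntervalMaximizer

variable {K : Type} [Field K] {ℓ : ℕ} {α : Fin (ℓ + 1) → ℝ} {I : NonemptyInterval (Fin (ℓ + 1))}

/-- The slope along `α` of the interval representation `I`: the mean of `α` over `I`. -/
noncomputable def intervalSlope (α : Fin (ℓ + 1) → ℝ) (I : NonemptyInterval (Fin (ℓ + 1))) : ℝ :=
  𝔼 x ∈ Finset.Icc I.fst I.snd, α x

theorem intervalSlope_sub_const (α : Fin (ℓ + 1) → ℝ) (t : ℝ)
    (I : NonemptyInterval (Fin (ℓ + 1))) :
    intervalSlope (fun x => α x - t) I = intervalSlope α I - t := by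
  rw [intervalSlope, Finset.expect_sub_distrib,
    Finset.expect_const (Finset.nonempty_Icc.2 I.fst_le_snd), intervalSlope]

variable {Z : ∀ x, Submodule K ((intervalRep K I).V x)}

theorem finrank_le_one_intervalRep (x : Fin (ℓ + 1)) : Module.finrank K (Z x) ≤ 1 :=
  (Submodule.finrank_le (Z x)).trans <| by
    rw [finrank_thinRep_V]
    split_ifs <;> norm_num

theorem finrank_eq_zero_of_notMem_intervalRep {x : Fin (ℓ + 1)}
    (hx : x ∉ Finset.Icc I.fst I.snd) : Module.finrank K (Z x) = 0 :=
  Nat.le_zero.1 <| (Submodule.finrank_le (Z x)).trans_eq <| by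
    rw [finrank_thinRep_V, if_neg hx]

theorem sum_Icc_finrank_intervalRep : ∑ x ∈ Finset.Icc I.fst I.snd, (Module.finrank K (Z x) : ℝ) =
    ∑ x, (Module.finrank K (Z x) : ℝ) :=
  Finset.sum_subset (Finset.subset_univ _) fun x _ hx => by
    rw [finrank_eq_zero_of_notMem_intervalRep hx, Nat.cast_zero]

theorem injective_intervalRep_f {e : Fin ℓ} (he : e.castSucc ∈ Finset.Icc I.fst I.snd)
    (he' : e.succ ∈ Finset.Icc I.fst I.snd) : Function.Injective ((intervalRep K I).f e) := by
  intro v w hvw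
  have hcoord := congrFun hvw ⟨he'⟩
  rw [thinRep_f_apply, thinRep_f_apply, Pi.one_apply, one_mul, one_mul, pliftCoord_eq v ⟨he⟩,
    pliftCoord_eq w ⟨he⟩] at hcoord
  exact funext fun _ => hcoord

theorem IsSubrep.finrank_le_finrank_intervalRep (hZ : IsSubrep _ Z) {x y : Fin (ℓ + 1)}
    (hx : I.fst ≤ x) (hxy : x ≤ y) (hy : y ≤ I.snd) :
    Module.finrank K (Z x) ≤ Module.finrank K (Z y) := by
  induction y using Fin.induction with
  | zero => rw [Fin.le_zero_iff.1 hxy]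
  | succ e ih =>
    rcases hxy.eq_or_lt with rfl | hlt
    · rfl
    have hxe : x ≤ e.castSucc := Fin.le_castSucc_iff.2 hlt
    have he : e.castSucc ≤ I.snd := (Fin.castSucc_le_succ e).trans hy
    have hinj : Function.Injective ((intervalRep K I).f e) := injective_intervalRep_f
      (Finset.mem_Icc.2 ⟨hx.trans hxe, he⟩) (Finset.mem_Icc.2 ⟨hx.trans hxy, hy⟩)
    calc Module.finrank K (Z x) ≤ Module.finrank K (Z e.castSucc) := ih hxe he
      _ = Module.finrank K ((Z e.castSucc).map ((intervalRep K I).f e)) :=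
        (Submodule.equivMapOfInjective _ hinj _).finrank_eq
      _ ≤ Module.finrank K (Z e.succ) := Submodule.finrank_mono (hZ e)

/- A subrepresentation occupies a final segment of the interval, where `α` is smallest. -/
theorem weight_intervalRep_le (hα : Antitone α) (hZ : IsSubrep _ Z) :
    weight α (intervalRep K I) Z ≤ intervalSlope α I * ∑ x, (Module.finrank K (Z x) : ℝ) := by
  have hanti : AntivaryOn α (fun x => (Module.finrank K (Z x) : ℝ))
      (Finset.Icc I.fst I.snd : Finset (Fin (ℓ + 1))) := fun x hx y hy hlt =>
    hα <| le_of_not_ge fun h => (Nat.cast_lt.1 hlt).not_ge <|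
      hZ.finrank_le_finrank_intervalRep (Finset.mem_Icc.1 hy).1 h (Finset.mem_Icc.1 hx).2
  have hweight : ∑ x ∈ Finset.Icc I.fst I.snd, α x * (Module.finrank K (Z x) : ℝ) =
      weight α (intervalRep K I) Z :=
    Finset.sum_subset (Finset.subset_univ _) fun x _ hx => by
      rw [finrank_eq_zero_of_notMem_intervalRep hx, Nat.cast_zero, mul_zero]
  have hcard : (0 : ℝ) < (Finset.Icc I.fst I.snd).card :=
    Nat.cast_pos.2 (Finset.card_pos.2 (Finset.nonempty_Icc.2 I.fst_le_snd))
  have hcheb := hanti.card_mul_sum_le_sum_mul_sum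
  rw [hweight, sum_Icc_finrank_intervalRep, ← Finset.card_mul_expect, mul_assoc] at hcheb
  exact le_of_mul_le_mul_left hcheb hcard

theorem weight_intervalRep_top (α : Fin (ℓ + 1) → ℝ) (I : NonemptyInterval (Fin (ℓ + 1))) :
    weight α (intervalRep K I) ⊤ = intervalSlope α I * (Finset.Icc I.fst I.snd).card := by
  simp only [weight, Pi.top_apply, finrank_top, finrank_thinRep_V, Nat.cast_ite, Nat.cast_one,
    Nat.cast_zero, mul_ite, mul_one, mul_zero, Finset.sum_ite_mem, Finset.univ_inter]
  rw [mul_comm, intervalSlope, Finset.card_mul_expect]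

theorem isLargestMaximizer_top_intervalRep (hα : Antitone α) (hI : 0 ≤ intervalSlope α I) :
    IsLargestMaximizer α (intervalRep K I) ⊤ where
  isSubrep := isSubrep_top _
  weight_le Z hZ := by
    have hdim : ∑ x, (Module.finrank K (Z x) : ℝ) ≤ (Finset.Icc I.fst I.snd).card :=
      calc ∑ x, (Module.finrank K (Z x) : ℝ)
          = ∑ x ∈ Finset.Icc I.fst I.snd, (Module.finrank K (Z x) : ℝ) :=
            sum_Icc_finrank_intervalRep.symm
        _ ≤ (Finset.Icc I.fst I.snd).card := by
            simpa only [nsmul_one] using Finset.sum_le_card_nsmul (Finset.Icc I.fst I.snd) _ (1 : ℝ)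
              fun x _ => Nat.cast_le_one.2 (finrank_le_one_intervalRep (Z := Z) x)
    rw [weight_intervalRep_top]
    exact (weight_intervalRep_le hα hZ).trans (mul_le_mul_of_nonneg_left hdim hI)
  le_of_weight_le _ _ _ := le_top

theorem isLargestMaximizer_bot_intervalRep (hα : Antitone α) (hI : intervalSlope α I < 0) :
    IsLargestMaximizer α (intervalRep K I) ⊥ where
  isSubrep := isSubrep_bot _
  weight_le Z hZ := by
    rw [weight_bot]
    exact (weight_intervalRep_le hα hZ).trans <| mul_nonpos_of_nonpos_of_nonneg hI.le <|
      Finset.sum_nonneg fun _ _ => Nat.cast_nonneg _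
  le_of_weight_le Z hZ hle := by
    rw [weight_bot] at hle
    have hdim : ∑ x, Module.finrank K (Z x) = 0 := by
      have := nonpos_of_mul_nonneg_right (hle.trans (weight_intervalRep_le hα hZ)) hI
      exact_mod_cast this.antisymm (Finset.sum_nonneg fun _ _ => Nat.cast_nonneg _)
    exact fun x => (Submodule.finrank_eq_zero.1 (Finset.sum_eq_zero_iff.1 hdim x
      (Finset.mem_univ x))).le

open scoped Classical in
theorem exists_isLargestMaximizer_intervalRep (hα : Antitone α)
    (I : NonemptyInterval (Fin (ℓ + 1))) :
    ∃ H, IsLargestMaximizer α (intervalRep K I) H ∧ ∀ x, Module.finrank K (H x) =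
      if 0 ≤ intervalSlope α I ∧ x ∈ Finset.Icc I.fst I.snd then 1 else 0 := by
  rcases le_or_gt 0 (intervalSlope α I) with hI | hI
  · refine ⟨⊤, isLargestMaximizer_top_intervalRep hα hI, fun x => ?_⟩
    rw [Pi.top_apply, finrank_top, finrank_thinRep_V]
    simp only [hI, true_and]
  · refine ⟨⊥, isLargestMaximizer_bot_intervalRep hα hI, fun x => ?_⟩
    rw [Pi.bot_apply, finrank_bot, if_neg fun h => hI.not_ge h.1]

open scoped Classical in
theorem exists_isLargestMaximizer_sumIntervals (hα : Antitone α)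
    (L : List (NonemptyInterval (Fin (ℓ + 1)))) :
    ∃ H, IsLargestMaximizer α (sumIntervals K L) H ∧ ∀ x, Module.finrank K (H x) =
      L.countP fun I => 0 ≤ intervalSlope α I ∧ x ∈ Finset.Icc I.fst I.snd := by
  induction L with
  | nil =>
    have hsub (x) (W W' : Submodule K ((sumIntervals (ℓ := ℓ) K []).V x)) : W ≤ W' := by
      have : Subsingleton ((sumIntervals (ℓ := ℓ) K []).V x) :=
        subsingleton_thinRep_V (Finset.notMem_empty x)
      exact fun v _ => Subsingleton.elim 0 v ▸ W'.zero_mem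
    refine ⟨⊥, ⟨isSubrep_bot _, fun Z _ => ?_, fun Z _ _ x => hsub x _ _⟩, fun x => finrank_bot K _⟩
    exact (congrArg _ (funext fun x => (hsub x _ _).antisymm (hsub x _ _))).le
  | cons I L ih =>
    obtain ⟨H, hH, hdim⟩ := exists_isLargestMaximizer_intervalRep (K := K) hα I
    obtain ⟨H', hH', hdim'⟩ := ih
    refine ⟨_, hH.prod hH', fun x => ?_⟩
    refine (finrank_prodFamily H H' x).trans ?_
    rw [hdim, hdim', List.countP_cons, add_comm]
    simp only [decide_eq_true_eq]

end IntervalMaximizer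

section Counting

variable {K : Type} [Field K] {ℓ : ℕ} {α : Fin (ℓ + 1) → ℝ}

theorem intervalSlope_lt_of_snd_lt (hα : StrictAnti α) {I J : NonemptyInterval (Fin (ℓ + 1))}
    (hfst : I.fst = J.fst) (hsnd : I.snd < J.snd) : intervalSlope α J < intervalSlope α I := by
  refine expect_lt_expect_of_ssubset (Finset.nonempty_Icc.2 I.fst_le_snd)
    (Finset.Icc_ssubset_Icc_right J.fst_le_snd hfst.ge hsnd) fun x hx y hy hyI => hα ?_
  rw [Finset.mem_Icc] at hx hy hyI
  exact hx.2.trans_lt (not_le.1 fun h => hyI ⟨hfst.le.trans hy.1, h⟩)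

/-- Intervals ordered by slope, ties being broken in favour of the smaller left endpoint. -/
noncomputable def slopeKey (α : Fin (ℓ + 1) → ℝ) (I : NonemptyInterval (Fin (ℓ + 1))) :
    ℝ ×ₗ (Fin (ℓ + 1))ᵒᵈ :=
  toLex (intervalSlope α I, OrderDual.toDual I.fst)

theorem slopeKey_injective (hα : StrictAnti α) : Function.Injective (slopeKey α) := fun I J h => by
  obtain ⟨hslope, hfst⟩ := Prod.ext_iff.1 (toLex_inj.1 h)
  have hfst : I.fst = J.fst := OrderDual.toDual_inj.1 hfst
  refine NonemptyInterval.ext (Prod.ext hfst ?_)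
  rcases lt_trichotomy I.snd J.snd with hlt | heq | hlt
  · exact absurd hslope (intervalSlope_lt_of_snd_lt hα hfst hlt).ne'
  · exact heq
  · exact absurd hslope (intervalSlope_lt_of_snd_lt hα hfst.symm hlt).ne

open scoped Classical in
theorem perm_of_countP_intervalSlope_eq (hα : StrictAnti α)
    {L L' : List (NonemptyInterval (Fin (ℓ + 1)))}
    (h : ∀ t x, L.countP (fun I => t ≤ intervalSlope α I ∧ x ∈ Finset.Icc I.fst I.snd) =
      L'.countP (fun I => t ≤ intervalSlope α I ∧ x ∈ Finset.Icc I.fst I.snd)) :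
    L.Perm L' :=
  perm_of_countP_eq (slopeKey_injective hα)
    (r := fun I J => intervalSlope α I ≤ intervalSlope α J ∧ I.fst ∈ Finset.Icc J.fst J.snd)
    (fun I => ⟨le_rfl, Finset.left_mem_Icc.2 I.fst_le_snd⟩)
    (fun _ _ ⟨hslope, hfst⟩ => Prod.Lex.toLex_le_toLex.2 <|
      hslope.lt_or_eq.imp_right fun heq => ⟨heq, (Finset.mem_Icc.1 hfst).1⟩)
    (fun I => h (intervalSlope α I) I.fst)

theorem complete_of_strictAnti (hα : StrictAnti α) :
    Complete (Q₁ := Fin ℓ) (σ := Fin.castSucc) (τ := Fin.succ) (K := K) α := by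
  classical
  intro M N hMN
  obtain ⟨L, ⟨φ⟩⟩ := exists_repIso_sumIntervals M
  obtain ⟨L', ⟨ψ⟩⟩ := exists_repIso_sumIntervals N
  have hcount (t x) :
      L.countP (fun I => t ≤ intervalSlope α I ∧ x ∈ Finset.Icc I.fst I.snd) =
        L'.countP (fun I => t ≤ intervalSlope α I ∧ x ∈ Finset.Icc I.fst I.snd) := by
    have hθ : Antitone fun x => α x - t := fun x y hxy => sub_le_sub_right (hα.antitone hxy) t
    obtain ⟨H, H', hH, hH', hdim⟩ := hMN.exists_isLargestMaximizer t
    obtain ⟨A, hA, hAdim⟩ := exists_isLargestMaximizer_sumIntervals (K := K) hθ L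
    obtain ⟨B, hB, hBdim⟩ := exists_isLargestMaximizer_sumIntervals (K := K) hθ L'
    simp only [intervalSlope_sub_const, sub_nonneg] at hAdim hBdim
    rw [← hAdim, ← hBdim, ← hH.finrank_eq hA φ, ← hH'.finrank_eq hB ψ, hdim]
  obtain ⟨χ⟩ := nonempty_repIso_sumIntervals_of_perm (K := K)
    (perm_of_countP_intervalSlope_eq hα hcount)
  exact ⟨φ.trans (χ.trans ψ.symm)⟩

end Counting

section ConstantCharge

variable {Q₀ Q₁ : Type} {σ τ : Q₁ → Q₀} {K : Type} [Field K] [Fintype Q₀]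
  {α : Q₀ → ℝ} {M : QRep Q₀ Q₁ σ τ K} {A B : ∀ x, Submodule K (M.V x)} {s : ℝ}

theorem slopeVec_quotDimVec_eq (hAB : A < B) (hs : ∀ x, A x ≠ B x → α x = s) :
    slopeVec α (quotDimVec M A B) = s := by
  have hsum : ∑ x, α x * (quotDimVec M A B x : ℝ) = s * ∑ x, (quotDimVec M A B x : ℝ) := by
    rw [Finset.mul_sum]
    refine Finset.sum_congr rfl fun x _ => ?_
    by_cases hx : A x = B x
    · rw [quotDimVec, hx, Nat.sub_self, Nat.cast_zero, mul_zero, mul_zero]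
    · rw [hs x hx]
  rw [slopeVec, hsum, mul_div_cancel_right₀ _ (sum_quotDimVec_pos hAB).ne']

theorem semistableQuot_of_const (hs : ∀ x, A x ≠ B x → α x = s) : SemistableQuot α M A B := by
  intro Z _ hAZ hZB ⟨x, hx⟩
  have hltZ : A < Z := lt_of_le_of_ne hAZ fun h => hx (congrFun h x).symm
  have hsZ (y) (hy : A y ≠ Z y) : α y = s :=
    hs y fun h => hy ((hAZ y).antisymm (h ▸ hZB y))
  rw [slopeVec_quotDimVec_eq hltZ hsZ, slopeVec_quotDimVec_eq (hltZ.trans_le hZB) hs]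

end ConstantCharge

section EdgeRep

variable {Q₀ Q₁ : Type} {σ τ : Q₁ → Q₀} {K : Type} [Field K]
  [DecidableEq Q₀] [DecidableEq Q₁] {e : Q₁}

/-- The representation supported on the endpoints of the edge `e`, on which `e` acts by `c` and the
other edges act by zero. -/
abbrev edgeRep (σ τ : Q₁ → Q₀) (e : Q₁) (c : K) : QRep Q₀ Q₁ σ τ K :=
  thinRep {σ e, τ e} (Pi.single e c)

theorem eq_or_eq_of_ne_edgeRep {c : K} {x : Q₀} {A B : Submodule K ((edgeRep σ τ e c).V x)}
    (h : A ≠ B) : x = σ e ∨ x = τ e := by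
  by_contra hx
  have := subsingleton_thinRep_V (σ := σ) (τ := τ) (c := Pi.single (M := fun _ => K) e c)
    (show x ∉ ({σ e, τ e} : Finset Q₀) by rwa [Finset.mem_insert, Finset.mem_singleton])
  exact h (Subsingleton.elim A B)

theorem bot_ne_top_edgeRep_target (c : K) :
    (⊥ : Submodule K ((edgeRep σ τ e c).V (τ e))) ≠ ⊤ :=
  have := nontrivial_thinRep_V (σ := σ) (τ := τ) (c := Pi.single (M := fun _ => K) e c)
    (show τ e ∈ ({σ e, τ e} : Finset Q₀) by simp)
  bot_ne_top

theorem bot_ne_top_edgeRep_source (c : K) :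
    (⊥ : Submodule K ((edgeRep σ τ e c).V (σ e))) ≠ ⊤ :=
  have := nontrivial_thinRep_V (σ := σ) (τ := τ) (c := Pi.single (M := fun _ => K) e c)
    (show σ e ∈ ({σ e, τ e} : Finset Q₀) by simp)
  bot_ne_top

theorem edgeRep_f_eq_zero_iff {c : K} : (edgeRep σ τ e c).f e = 0 ↔ c = 0 := by
  rw [thinRep_f_eq_zero_iff (by simp) (by simp), Pi.single_eq_same]

/-- The part of `edgeRep` supported at the target of the edge. -/
def targetFamily (σ τ : Q₁ → Q₀) (e : Q₁) (c : K) :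
    ∀ x, Submodule K ((edgeRep σ τ e c).V x) :=
  Function.update ⊥ (τ e) ⊤

theorem targetFamily_target (c : K) : targetFamily σ τ e c (τ e) = ⊤ :=
  Function.update_self (β := fun x => Submodule K ((edgeRep σ τ e c).V x)) _ _ _

theorem targetFamily_of_ne (c : K) {x : Q₀} (hx : x ≠ τ e) : targetFamily σ τ e c x = ⊥ :=
  Function.update_of_ne (β := fun x => Submodule K ((edgeRep σ τ e c).V x)) hx _ _

theorem eq_target_of_bot_ne_targetFamily {c : K} {x : Q₀} (hx : ⊥ ≠ targetFamily σ τ e c x) :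
    x = τ e :=
  by_contra fun h => hx (targetFamily_of_ne c h).symm

theorem eq_source_of_targetFamily_ne_top {c : K} {x : Q₀} (hx : targetFamily σ τ e c x ≠ ⊤) :
    x = σ e :=
  (eq_or_eq_of_ne_edgeRep hx).resolve_right fun h => hx (h ▸ targetFamily_target c)

theorem isSubrep_targetFamily (he : σ e ≠ τ e) (c : K) :
    IsSubrep _ (targetFamily σ τ e c) := by
  intro e'
  by_cases hσ : σ e' = τ e
  · have hne : e' ≠ e := fun h => he (h ▸ hσ)
    have hf : (edgeRep σ τ e c).f e' = 0 :=
      thinRep_f_eq_zero (Pi.single_eq_of_ne (M := fun _ => K) hne c)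
    rw [hf, Submodule.map_zero]
    exact bot_le
  · rw [targetFamily_of_ne c hσ, Submodule.map_bot]
    exact bot_le

theorem bot_lt_targetFamily (c : K) : ⊥ < targetFamily σ τ e c :=
  bot_lt_iff_ne_bot.2 fun h => bot_ne_top_edgeRep_target c <|
    (congrFun h (τ e)).symm.trans (targetFamily_target c)

theorem targetFamily_lt_top (he : σ e ≠ τ e) (c : K) : targetFamily σ τ e c < ⊤ :=
  lt_top_iff_ne_top.2 fun h => bot_ne_top_edgeRep_source c <|
    (targetFamily_of_ne c he).symm.trans (congrFun h (σ e))

end EdgeRep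

section EdgeFiltration

variable {Q₀ Q₁ : Type} {σ τ : Q₁ → Q₀} {K : Type} [Field K] [Fintype Q₀]
  {α : Q₀ → ℝ}

section EndpointFiltrations

variable [DecidableEq Q₀] [DecidableEq Q₁] {e : Q₁}

/-- The one-step filtration of `edgeRep` for a charge with equal values at the endpoints. -/
noncomputable def HNFiltration.edgeRepOfEq (h : α (σ e) = α (τ e)) (c : K) :
    HNFiltration α (edgeRep σ τ e c) where
  n := 1
  W := ![⊥, ⊤]
  subrep := Fin.forall_fin_two.2 ⟨isSubrep_bot _, isSubrep_top _⟩
  bot _ := rfl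
  top _ := rfl
  mono := Fin.forall_fin_one.2 fun _ => bot_le
  proper := Fin.forall_fin_one.2 ⟨τ e, bot_ne_top_edgeRep_target c⟩
  ss _ := semistableQuot_of_const (s := α (τ e)) fun _ hx =>
    (eq_or_eq_of_ne_edgeRep hx).elim (fun hx => hx ▸ h) fun hx => hx ▸ rfl
  dec i j hij := absurd (Subsingleton.elim i j) hij.ne

/-- The two-step filtration of `edgeRep` for a charge increasing along the edge. -/
noncomputable def HNFiltration.edgeRepOfLT (h : α (σ e) < α (τ e)) (c : K) :
    HNFiltration α (edgeRep σ τ e c) :=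
  have he : σ e ≠ τ e := fun heq => h.ne (congrArg α heq)
  have hs₀ (x) (hx : ⊥ ≠ targetFamily σ τ e c x) : α x = α (τ e) :=
    congrArg α (eq_target_of_bot_ne_targetFamily hx)
  have hs₁ (x) (hx : targetFamily σ τ e c x ≠ ⊤) : α x = α (σ e) :=
    congrArg α (eq_source_of_targetFamily_ne_top hx)
  { n := 2
    W := ![⊥, targetFamily σ τ e c, ⊤]
    subrep := Fin.forall_fin_succ.2 ⟨isSubrep_bot _,
      Fin.forall_fin_two.2 ⟨isSubrep_targetFamily he c, isSubrep_top _⟩⟩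
    bot := fun _ => rfl
    top := fun _ => rfl
    mono := Fin.forall_fin_two.2 ⟨fun _ => bot_le, fun _ => le_top⟩
    proper := Fin.forall_fin_two.2 ⟨Function.ne_iff.1 (bot_lt_targetFamily c).ne,
      Function.ne_iff.1 (targetFamily_lt_top he c).ne⟩
    ss := Fin.forall_fin_two.2 ⟨semistableQuot_of_const hs₀, semistableQuot_of_const hs₁⟩
    dec := fun i j hij => by
      obtain ⟨rfl, rfl⟩ : i = 0 ∧ j = 1 := by omega
      have h₀ := slopeVec_quotDimVec_eq (bot_lt_targetFamily c) hs₀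
      have h₁ := slopeVec_quotDimVec_eq (targetFamily_lt_top he c) hs₁
      exact (h₁.trans_lt h).trans_eq h₀.symm }

theorem sameHNType_edgeRep (h : α (σ e) ≤ α (τ e)) (c d : K) :
    SameHNType α (edgeRep σ τ e c) (edgeRep σ τ e d) := by
  rcases h.eq_or_lt with heq | hlt
  · exact ⟨.edgeRepOfEq heq c, .edgeRepOfEq heq d, rfl⟩
  · exact ⟨.edgeRepOfLT hlt c, .edgeRepOfLT hlt d, rfl⟩

end EndpointFiltrations

theorem Complete.lt_of_edge (hα : Complete (Q₁ := Q₁) (σ := σ) (τ := τ) (K := K) α) (e : Q₁) :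
    α (τ e) < α (σ e) := by
  classical
  by_contra! h
  obtain ⟨φ⟩ := hα _ _ (sameHNType_edgeRep h (1 : K) 0)
  exact one_ne_zero (edgeRep_f_eq_zero_iff.1 (φ.f_eq_zero (edgeRep_f_eq_zero_iff.2 rfl)))

end EdgeFiltration

end QRep

/-- **Complete central charges for ordinary persistence modules.** For the equioriented
type `A_ℓ` quiver `x₀ → x₁ → ⋯ → x_ℓ`, a central charge `α` is complete (i.e. equality
of HN types along `α` implies isomorphism of representations) if and only if
`α(x_i) > α(x_{i+1})` for all `0 ≤ i ≤ ℓ-1`. -/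
theorem complete_iff_strictly_decreasing (K : Type) [Field K] (ℓ : ℕ)
    (α : Fin (ℓ+1) → ℝ) :
    QRep.Complete (Q₁ := Fin ℓ) (σ := Fin.castSucc) (τ := Fin.succ) (K := K) α ↔
      ∀ i : Fin ℓ, α i.castSucc > α i.succ :=
  ⟨fun hα i => hα.lt_of_edge i,
    fun h => QRep.complete_of_strictAnti (Fin.strictAnti_iff_succ_lt.2 h)⟩
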